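/- Let G ⊆ 𝕋 be a transversal of Q₁₀ and let x ∈ 𝕋 with x ∉ G. Then the set {q ∈ Q₁₀ : q ≠ 0 and x + q ∈ G} has exactly one element, while the set {q ∈ Q₁₀ : q ≠ 0 and x + 10·q ∈ G} has exactly ten elements. (Thus the bettor who, for every nonzero q ∈ Q₁₀, stakes on the event x + 10·q ∈ G against the event x + q ∈ G loses exactly one bet and wins exactly ten.) -/

import Mathlib

/-- `𝕋 = ℝ/ℤ`, the circle group (reals modulo 1). -/
abbrev Circle1 : Type := AddCircle (1 : ℝ)

/-- `Q₁₀`: the subgroup of `𝕋` of elements annihilated by some power of 10. -/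
def Q10 : Set Circle1 := {x | ∃ b : ℕ, ((10 : ℕ) ^ b) • x = 0}

/-- `G` is a transversal of `Q₁₀`: every `x ∈ 𝕋` has a unique `g ∈ G` with `x - g ∈ Q₁₀`. -/
def IsTransversal (G : Set Circle1) : Prop :=
  ∀ x : Circle1, ∃! g : Circle1, g ∈ G ∧ x - g ∈ Q10

/- Let `h` be the element of the subgroup with `x + h ∈ G`. For a homomorphism `f`, the bets with
`x + f q ∈ G` are those with `q` in the fibre of `f` over `h`, a coset of `ker f`; since `x ∉ G`, we
have `h ≠ 0`, so `q = 0` is not in that fibre. The lost bets are the case `f = id`, the won bets the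
case `f = (10 • ·)`, whose kernel is generated by `1 / 10`. -/

section Transversal

theorem isComplement_iff_existsUnique_mem_and_sub_mem {A : Type*} [AddCommGroup A] {S T : Set A} :
    AddSubgroup.IsComplement S T ↔ ∀ x, ∃! s, s ∈ S ∧ x - s ∈ T := by
  simp [AddSubgroup.isComplement_iff_existsUnique_neg_add_mem, ExistsUnique, sub_eq_neg_add,
    and_assoc, and_left_comm]

variable {A : Type*} [AddGroup A] {H : AddSubgroup A} {G : Set A}

theorem existsUnique_mem_and_add_mem_of_isComplement (hG : AddSubgroup.IsComplement G (H : Set A))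
    (x : A) : ∃! h, h ∈ H ∧ x + h ∈ G := by
  obtain ⟨⟨g, hgG⟩, hgH, g_unique⟩ :=
    AddSubgroup.isComplement_iff_existsUnique_neg_add_mem.mp hG x
  refine ⟨-x + g, ⟨by simpa using H.neg_mem hgH, by simpa using hgG⟩, ?_⟩
  rintro h ⟨hH, hxG⟩
  have hxg : x + h = g := congrArg Subtype.val (g_unique ⟨x + h, hxG⟩ (by simpa using hH))
  exact eq_neg_add_of_add_eq hxg

theorem ncard_setOf_map_mem_and_ne_zero_and_add_map_mem {B : Type*} [AddGroup B] {f : B →+ A}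
    (hf : Function.Surjective f) (hG : AddSubgroup.IsComplement G (H : Set A)) {x : A}
    (hx : x ∉ G) : {q | f q ∈ H ∧ q ≠ 0 ∧ x + f q ∈ G}.ncard = Nat.card f.ker := by
  obtain ⟨h, ⟨hH, hxG⟩, h_unique⟩ := existsUnique_mem_and_add_mem_of_isComplement hG x
  have h_ne_zero : h ≠ 0 := by
    rintro rfl
    exact hx (by simpa only [add_zero] using hxG)
  have eq_fiber : {q | f q ∈ H ∧ q ≠ 0 ∧ x + f q ∈ G} = f ⁻¹' {h} := by
    ext q
    constructor
    · rintro ⟨hqH, -, hqG⟩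
      exact h_unique (f q) ⟨hqH, hqG⟩
    · rintro rfl
      exact ⟨hH, fun hq ↦ h_ne_zero (by rw [hq, map_zero]), hxG⟩
  rw [eq_fiber]
  exact Nat.card_congr (f.fiberEquivKerOfSurjective hf h)

end Transversal

section AddCircle

theorem nsmulAddMonoidHom_addCircle_surjective {𝕜 : Type*} [DivisionRing 𝕜] [CharZero 𝕜] {p : 𝕜}
    {n : ℕ} (hn : n ≠ 0) :
    Function.Surjective (nsmulAddMonoidHom n : AddCircle p →+ AddCircle p) := by
  let _ : DivisibleBy 𝕜 ℕ := AddGroup.divisibleByNatOfDivisibleByInt 𝕜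
  let _ : DivisibleBy (AddCircle p) ℕ := QuotientAddGroup.divisibleBy _
  exact DivisibleBy.surjective_smul (AddCircle p) ℕ hn

variable {𝕜 : Type*} [Field 𝕜] [LinearOrder 𝕜] [IsStrictOrderedRing 𝕜] {p : 𝕜} [Fact (0 < p)]
  {n : ℕ}

theorem ker_nsmulAddMonoidHom_addCircle (hn : n ≠ 0) :
    (nsmulAddMonoidHom n : AddCircle p →+ AddCircle p).ker =
      AddSubgroup.zmultiples ((p / n : 𝕜) : AddCircle p) := by
  have hn_pos := Nat.pos_of_ne_zero hn
  apply le_antisymm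
  · intro t ht
    obtain ⟨m, -, rfl⟩ := (AddCircle.nsmul_eq_zero_iff hn_pos).mp ht
    rw [AddCircle.natCast_div_mul_eq_nsmul]
    exact AddSubgroup.nsmul_mem_zmultiples _ m
  · rw [AddSubgroup.zmultiples_le, AddMonoidHom.mem_ker, nsmulAddMonoidHom_apply,
      ← addOrderOf_dvd_iff_nsmul_eq_zero, AddCircle.addOrderOf_period_div hn_pos]

theorem card_ker_nsmulAddMonoidHom_addCircle (hn : n ≠ 0) :
    Nat.card (nsmulAddMonoidHom n : AddCircle p →+ AddCircle p).ker = n := by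
  rw [ker_nsmulAddMonoidHom_addCircle hn, Nat.card_zmultiples,
    AddCircle.addOrderOf_period_div (Nat.pos_of_ne_zero hn)]

theorem stmt3_general (hn : n ≠ 0) {H : AddSubgroup (AddCircle p)}
    (hH : ∀ q, n • q ∈ H ↔ q ∈ H) {G : Set (AddCircle p)}
    (hG : AddSubgroup.IsComplement G (H : Set (AddCircle p))) {x : AddCircle p} (hx : x ∉ G) :
    {q ∈ (H : Set (AddCircle p)) | q ≠ 0 ∧ x + q ∈ G}.ncard = 1 ∧
    {q ∈ (H : Set (AddCircle p)) | q ≠ 0 ∧ x + n • q ∈ G}.ncard = n := by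
  constructor
  · simpa using ncard_setOf_map_mem_and_ne_zero_and_add_map_mem
      (f := AddMonoidHom.id (AddCircle p)) Function.surjective_id hG hx
  · simpa only [SetLike.mem_coe, nsmulAddMonoidHom_apply, hH,
      card_ker_nsmulAddMonoidHom_addCircle hn] using
      ncard_setOf_map_mem_and_ne_zero_and_add_map_mem
        (nsmulAddMonoidHom_addCircle_surjective hn) hG hx

end AddCircle

section PowTorsion

/-- The subgroup `A[n^∞]` of elements annihilated by some power of `n`; for `n = 10` and `A = 𝕋` its
underlying set is `Q10`. -/
def powTorsion (A : Type*) [AddCommGroup A] (n : ℕ) : AddSubgroup A :=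
  (Submodule.torsion' ℤ A (Submonoid.powers n)).toAddSubgroup

variable {A : Type*} [AddCommGroup A] {n : ℕ} {q : A}

theorem mem_powTorsion : q ∈ powTorsion A n ↔ ∃ b : ℕ, n ^ b • q = 0 := by
  simp [powTorsion, Submodule.mem_torsion'_iff, Submonoid.mem_powers_iff, Submonoid.smul_def]

theorem nsmul_mem_powTorsion : n • q ∈ powTorsion A n ↔ q ∈ powTorsion A n := by
  refine ⟨fun h ↦ ?_, fun h ↦ AddSubgroup.nsmul_mem _ h n⟩
  obtain ⟨b, hb⟩ := mem_powTorsion.mp h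
  exact mem_powTorsion.mpr ⟨b + 1, by rw [pow_succ, mul_nsmul', hb]⟩

end PowTorsion

theorem coe_powTorsion_ten : (powTorsion Circle1 10 : Set Circle1) = Q10 :=
  Set.ext fun _ ↦ mem_powTorsion

theorem stmt3 (G : Set Circle1) (hG : IsTransversal G) (x : Circle1) (hx : x ∉ G) :
    {q ∈ Q10 | q ≠ 0 ∧ x + q ∈ G}.ncard = 1 ∧
    {q ∈ Q10 | q ≠ 0 ∧ x + (10 : ℕ) • q ∈ G}.ncard = 10 := by
  simp only [IsTransversal, ← coe_powTorsion_ten] at hG ⊢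
  exact stmt3_general (by norm_num) (fun _ ↦ nsmul_mem_powTorsion)
    (isComplement_iff_existsUnique_mem_and_sub_mem.mpr hG) hx
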